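/- Suppose J ∈ C¹(X) satisfies (I1)–(I8). Then: (a) c_ℳ ≥ a > 0 and 𝒥 := J∘m has a Cerami sequence at level c_ℳ, i.e. a sequence u_n ∈ X⁺ with 𝒥(u_n) → c_ℳ and (1+‖u_n‖)𝒥′(u_n) → 0; (b) c_ℳ = c_𝒩 := inf_{𝒩} J. -/

import Mathlib

/-!
STATEMENT 2.  Abstract critical point theorem: if J ∈ C¹(X) on X = X⁺ ⊕ X⁻
(X reflexive Banach, X⁺ Hilbert) satisfies (I1)–(I8), then (a) c_ℳ ≥ a > 0 and
𝒥 = J∘m admits a Cerami sequence at level c_ℳ; (b) c_ℳ = c_𝒩 = inf_𝒩 J.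
-/

open Filter Topology

noncomputable section

variable {P Q : Type*}
  [NormedAddCommGroup P] [InnerProductSpace ℝ P] [CompleteSpace P]
  [NormedAddCommGroup Q] [NormedSpace ℝ Q] [CompleteSpace Q]

/-- The norm ‖u‖ = (‖u⁺‖² + ‖u⁻‖²)^{1/2} on X = X⁺ ⊕ X⁻. -/
def XNorm (u : P × Q) : ℝ := Real.sqrt (‖u.1‖ ^ 2 + ‖u.2‖ ^ 2)

/-- Convergence in the 𝒯 topology: norm convergence in X⁺, weak convergence in X⁻. -/
def TConv (u : ℕ → P × Q) (v : P × Q) : Prop :=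
  Tendsto (fun n => (u n).1) atTop (nhds v.1) ∧
    ∀ ℓ : Q →L[ℝ] ℝ, Tendsto (fun n => ℓ (u n).2) atTop (nhds (ℓ v.2))

/-- The functional J(u) = ½‖u⁺‖² − I(u). -/
def Jfun (I : P × Q → ℝ) (u : P × Q) : ℝ := ‖u.1‖ ^ 2 / 2 - I u

/-- ℳ = {u : I′(u)|_{X⁻} = 0}. -/
def MSet (I : P × Q → ℝ) : Set (P × Q) :=
  {u | ∀ v : Q, fderiv ℝ I u (0, v) = 0}

/-- 𝒩 = {u ∈ ℳ ∖ X⁻ : J′(u)(u) = 0}. -/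
def NSet (I : P × Q → ℝ) : Set (P × Q) :=
  {u | u ∈ MSet I ∧ u.1 ≠ 0 ∧ fderiv ℝ (Jfun I) u u = 0}

/-- The hypotheses (I1)–(I8) on I (with the data r, a of (I6)). -/
structure HypI (I : P × Q → ℝ) (r a : ℝ) : Prop where
  refl : Function.Surjective (NormedSpace.inclusionInDoubleDual ℝ Q)
  i1 : ContDiff ℝ 1 I ∧ I 0 = 0 ∧ ∀ u, 0 ≤ I u
  i2 : ∀ (u : ℕ → P × Q) (v : P × Q), TConv u v →
    ∀ c : ℝ, c < I v → ∀ᶠ n in atTop, c < I (u n)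
  i3 : ∀ (u : ℕ → P × Q) (v : P × Q), TConv u v →
    Tendsto (fun n => I (u n)) atTop (nhds (I v)) → Tendsto u atTop (nhds v)
  i4 : ∀ M : ℝ, ∃ R : ℝ, ∀ u : P × Q, R ≤ XNorm u → M ≤ ‖u.1‖ + I u
  i5 : ∀ u ∈ MSet I, ∀ v : Q, v ≠ 0 → I u < I (u + (0, v))
  i6 : 0 < r ∧ a = sInf {y : ℝ | ∃ p : P, ‖p‖ = r ∧ y = Jfun I (p, 0)} ∧ 0 < a
  i7 : ∀ (t : ℕ → ℝ) (u : ℕ → P × Q) (p : P), Tendsto t atTop atTop →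
    Tendsto (fun n => (u n).1) atTop (nhds p) → p ≠ 0 →
    Tendsto (fun n => I (t n • u n) / t n ^ 2) atTop atTop
  i8 : ∀ u ∈ NSet I, ∀ t : ℝ, 0 ≤ t → ∀ v : Q,
    (t ^ 2 - 1) / 2 * fderiv ℝ I u u + I u - I (t • u + (0, v)) ≤ 0

/-- The map m : X⁺ → ℳ (u⁺ ↦ unique point of (u⁺ + X⁻) ∩ ℳ). -/
structure IsMMap (I : P × Q → ℝ) (m : P → P × Q) : Prop where
  mem : ∀ p : P, m p ∈ MSet I ∧ (m p).1 = p
  uniq : ∀ (p : P) (w : P × Q), w ∈ MSet I → w.1 = p → w = m p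

/-- The mountain pass value c_ℳ over paths in ℳ. -/
def cM (I : P × Q → ℝ) (r : ℝ) : ℝ :=
  sInf {y : ℝ | ∃ γ : C(Set.Icc (0:ℝ) 1, P × Q),
    (∀ t, γ t ∈ MSet I) ∧ γ ⟨0, by norm_num⟩ = 0 ∧
    r < ‖(γ ⟨1, by norm_num⟩).1‖ ∧ Jfun I (γ ⟨1, by norm_num⟩) < 0 ∧
    y = sSup (Set.range fun t => Jfun I (γ t))}


/-- Bounded sequences in a reflexive space have weakly convergent subsequences. -/
theorem weak_seq_compact {Q : Type*} [NormedAddCommGroup Q] [NormedSpace ℝ Q]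
    (hrefl : Function.Surjective (NormedSpace.inclusionInDoubleDual ℝ Q))
    (u : ℕ → Q) (C : ℝ) (hu : ∀ n, ‖u n‖ ≤ C) :
    ∃ (v : Q) (φ : ℕ → ℕ), StrictMono φ ∧
      ∀ ℓ : Q →L[ℝ] ℝ, Tendsto (fun n => ℓ (u (φ n))) atTop (nhds (ℓ v)) := by
  classical
  set Y : Submodule ℝ Q := Submodule.span ℝ (Set.range u) with hY
  have hsep : TopologicalSpace.IsSeparable (closure (Y : Set Q)) :=
    ((Set.countable_range u).isSeparable.span (R := ℝ)).closure
  obtain ⟨D, hDc, hD⟩ := hsep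
  have hDne : D.Nonempty := by
    by_contra h
    rw [Set.not_nonempty_iff_eq_empty] at h
    subst h
    have : (0 : Q) ∈ closure (∅ : Set Q) := hD (subset_closure Y.zero_mem)
    simp at this
  obtain ⟨d, rfl⟩ := hDc.exists_eq_range hDne
  choose f hf1 hf2 using fun n => exists_dual_vector'' ℝ (d n)
  have hsepf : ∀ w ∈ closure (Y : Set Q), (∀ n, f n w = 0) → w = 0 := by
    intro w hw h0
    have hw' := hD hw
    by_contra hne
    have hpos : 0 < ‖w‖ := norm_pos_iff.mpr hne
    obtain ⟨_, ⟨n, rfl⟩, hn⟩ := Metric.mem_closure_iff.mp hw' (‖w‖ / 3) (by positivity)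
    rw [dist_eq_norm] at hn
    have h1 : ‖d n‖ ≤ ‖w - d n‖ := by
      have h2 : f n (w - d n) = - ‖d n‖ := by
        rw [map_sub, h0 n, hf2 n]; simp
      have h3 := (f n).le_opNorm (w - d n)
      rw [h2, norm_neg, norm_norm] at h3
      nlinarith [norm_nonneg (w - d n), hf1 n]
    have h4 : ‖w‖ ≤ ‖w - d n‖ + ‖d n‖ := by
      simpa using norm_add_le (w - d n) (d n)
    linarith
  set S : Set (WeakSpace ℝ Q) := toWeakSpace ℝ Q '' Set.range u with hS
  have hK : IsCompact (closure S) := by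
    apply NormedSpace.isCompact_closure_of_isBounded
    · rw [hS, Set.preimage_image_eq _ (toWeakSpace ℝ Q).injective]
      rw [isBounded_iff_forall_norm_le]
      exact ⟨C, by rintro _ ⟨n, rfl⟩; exact hu n⟩
    · intro x _
      obtain ⟨y, hy⟩ := hrefl (WeakDual.toStrongDual x)
      refine ⟨toWeakSpace ℝ Q y, ?_⟩
      refine DFunLike.ext _ _ fun ℓ => ?_
      exact congrArg (fun g => g ℓ) hy
  have hKY : closure S ⊆ toWeakSpace ℝ Q '' closure (Y : Set Q) := by
    rw [Convex.toWeakSpace_closure _ Y.convex]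
    apply closure_mono
    apply Set.image_mono
    exact Submodule.subset_span
  have hcont : ∀ ℓ : Q →L[ℝ] ℝ, Continuous fun x : WeakSpace ℝ Q => ℓ ((toWeakSpace ℝ Q).symm x) :=
    fun ℓ => WeakBilin.eval_continuous (topDualPairing ℝ Q).flip ℓ
  have : CompactSpace (closure S) := isCompact_iff_compactSpace.mp hK
  have : TopologicalSpace.MetrizableSpace (closure S) := by
    refine Metric.PiNatEmbed.TopologicalSpace.MetrizableSpace.of_countable_separating
      (fun n (k : closure S) => f n ((toWeakSpace ℝ Q).symm (k : WeakSpace ℝ Q)))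
      (fun n => (hcont (f n)).comp continuous_subtype_val) ?_
    intro x y hxy
    by_contra hcon
    push Not at hcon
    apply hxy
    obtain ⟨x', hx', hxe⟩ := hKY x.2
    obtain ⟨y', hy', hye⟩ := hKY y.2
    have : x' - y' = 0 := by
      apply hsepf
      · have := Y.topologicalClosure.sub_mem (x := x') (y := y') hx' hy'
        exact this
      · intro n
        have := hcon n
        simp only [← hxe, ← hye, LinearEquiv.symm_apply_apply] at this
        rw [map_sub, this, sub_self]
    apply Subtype.ext
    rw [← hxe, ← hye, sub_eq_zero.mp this]
  let x : ℕ → closure S := fun n => ⟨toWeakSpace ℝ Q (u n), subset_closure ⟨u n, ⟨n, rfl⟩, rfl⟩⟩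
  obtain ⟨k, φ, hφ, hlim⟩ := CompactSpace.tendsto_subseq x
  refine ⟨(toWeakSpace ℝ Q).symm k, φ, hφ, fun ℓ => ?_⟩
  have := (((hcont ℓ).comp continuous_subtype_val).tendsto k).comp hlim
  simpa [Function.comp_def, x] using this

/-- A weak form of Ekeland's variational principle. -/
theorem ekeland_weak {E : Type*} [MetricSpace E] [CompleteSpace E] (Φ : E → ℝ)
    (hΦ : Continuous Φ) (b : ℝ) (hb : ∀ x, b ≤ Φ x) (ε : ℝ) (hε : 0 < ε) (x₀ : E) :
    ∃ x, Φ x ≤ Φ x₀ ∧ ∀ y, Φ x - ε * dist x y ≤ Φ y := by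
  classical
  let A : E → Set E := fun x => {y | Φ y + ε * dist x y ≤ Φ x}
  have hAself : ∀ x, x ∈ A x := fun x => by simp [A]
  have hAtrans : ∀ x y z, y ∈ A x → z ∈ A y → z ∈ A x := by
    intro x y z h1 h2
    simp only [A, Set.mem_ofPred_eq] at *
    nlinarith [dist_triangle x y z]
  have hbd : ∀ x, BddBelow (Φ '' A x) := fun x => ⟨b, by rintro _ ⟨y, -, rfl⟩; exact hb y⟩
  have hex : ∀ (n : ℕ) (x : E), ∃ y ∈ A x, Φ y < sInf (Φ '' A x) + 1 / ((n : ℝ) + 1) := by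
    intro n x
    have hne : (Φ '' A x).Nonempty := ⟨_, x, hAself x, rfl⟩
    obtain ⟨_, ⟨y, hy, rfl⟩, h⟩ := Real.lt_sInf_add_pos hne
      (show (0:ℝ) < 1 / ((n : ℝ) + 1) by positivity)
    exact ⟨y, hy, h⟩
  choose g hg1 hg2 using hex
  let x : ℕ → E := fun n => Nat.rec x₀ (fun n y => g n y) n
  have hxs : ∀ n, x (n + 1) = g n (x n) := fun n => rfl
  have hmem : ∀ n k, x (n + k) ∈ A (x n) := by
    intro n k
    induction k with
    | zero => exact hAself _
    | succ k ih =>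
      apply hAtrans _ _ _ ih
      rw [← add_assoc, hxs]
      exact hg1 _ _
  have hdiam : ∀ n, ∀ y ∈ A (x (n + 1)), ε * dist (x (n + 1)) y ≤ 1 / ((n : ℝ) + 1) := by
    intro n y hy
    have h1 : y ∈ A (x n) := hAtrans _ _ _ (by rw [hxs]; exact hg1 _ _) hy
    have h2 := csInf_le (hbd (x n)) ⟨y, h1, rfl⟩
    have h3 := hg2 n (x n)
    rw [← hxs] at h3
    have h4 : Φ y + ε * dist (x (n + 1)) y ≤ Φ (x (n + 1)) := hy
    linarith
  have hcau : CauchySeq x := by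
    rw [Metric.cauchySeq_iff']
    intro η hη
    obtain ⟨n, hn⟩ := exists_nat_one_div_lt (show 0 < ε * η by positivity)
    refine ⟨n + 1, fun k hk => ?_⟩
    obtain ⟨j, rfl⟩ := Nat.exists_eq_add_of_le hk
    have := hdiam n _ (hmem (n + 1) j)
    rw [dist_comm]
    by_contra hcon
    push Not at hcon
    nlinarith
  obtain ⟨z, hz⟩ := cauchySeq_tendsto_of_complete hcau
  have hAclosed : ∀ w, IsClosed (A w) := fun w =>
    isClosed_le (hΦ.add (continuous_const.mul (continuous_const.dist continuous_id)))
      continuous_const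
  have hzA : ∀ n, z ∈ A (x n) := by
    intro n
    apply (hAclosed (x n)).mem_of_tendsto hz
    filter_upwards [eventually_ge_atTop n] with k hk
    obtain ⟨j, rfl⟩ := Nat.exists_eq_add_of_le hk
    exact hmem n j
  refine ⟨z, ?_, fun y => ?_⟩
  · have h : Φ z + ε * dist x₀ z ≤ Φ x₀ := hzA 0
    nlinarith [dist_nonneg (x := x₀) (y := z)]
  · by_contra hcon
    push Not at hcon
    have hy : y ∈ A z := by simp only [A, Set.mem_ofPred_eq]; linarith
    have hyz : y = z := by
      have hlim : Tendsto (fun n => ε * dist (x (n + 1)) y) atTop (nhds (ε * dist z y)) :=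
        ((hz.comp (tendsto_add_atTop_nat 1)).dist tendsto_const_nhds).const_mul ε
      have h0 := le_of_tendsto_of_tendsto' hlim tendsto_one_div_add_atTop_nhds_zero_nat
        (fun n => hdiam n y (hAtrans _ _ _ (hzA (n + 1)) hy))
      have : dist z y ≤ 0 := by
        by_contra h; push Not at h; nlinarith
      exact (dist_le_zero.mp this).symm
    subst hyz
    simp at hcon

/-- Maximum of a continuous function on the unit interval. -/
def supC (f : C(unitInterval, ℝ)) : ℝ := sSup (Set.range f)

theorem le_supC (f : C(unitInterval, ℝ)) (t : unitInterval) : f t ≤ supC f :=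
  le_csSup (isCompact_range f.continuous).bddAbove ⟨t, rfl⟩

theorem supC_le (f : C(unitInterval, ℝ)) (b : ℝ) (h : ∀ t, f t ≤ b) : supC f ≤ b :=
  csSup_le (Set.range_nonempty f) (by rintro _ ⟨t, rfl⟩; exact h t)

theorem exists_eq_supC (f : C(unitInterval, ℝ)) : ∃ t, f t = supC f := by
  have := (isCompact_range f.continuous).sSup_mem (Set.range_nonempty f)
  obtain ⟨t, ht⟩ := this
  exact ⟨t, ht⟩

theorem continuous_supC : Continuous supC := by
  apply LipschitzWith.continuous (K := 1)
  apply LipschitzWith.of_le_add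
  intro f g
  apply supC_le
  intro t
  have h1 := le_supC g t
  have h2 := (le_abs_self _).trans (ContinuousMap.dist_apply_le_dist (f := f) (g := g) t)
  linarith

section Weight
variable {P : Type*} [NormedAddCommGroup P] [InnerProductSpace ℝ P]

/-- Embedding of `P` into `P × ℝ` realizing the Cerami weight. -/
def psiC : C(P, P × ℝ) where
  toFun x := ((1 + ‖x‖)⁻¹ • x, Real.log (1 + ‖x‖))
  continuous_toFun := by
    have h : ∀ x : P, 1 + ‖x‖ ≠ 0 := fun x => by positivity
    refine Continuous.prodMk ?_ ?_
    · exact ((continuous_const.add continuous_norm).inv₀ h).smul continuous_id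
    · exact (continuous_const.add continuous_norm).log h

/-- Left inverse of `psiC`. -/
def phiC : C(P × ℝ, P) where
  toFun y := Real.exp y.2 • y.1
  continuous_toFun := by fun_prop

theorem phi_psi (x : P) : phiC (psiC x) = x := by
  have h : 0 < 1 + ‖x‖ := by positivity
  simp only [phiC, psiC, ContinuousMap.coe_mk]
  rw [Real.exp_log h, smul_smul, mul_inv_cancel₀ h.ne', one_smul]

theorem psi_constraint (x : P) : ‖(psiC x).1‖ = 1 - Real.exp (-(psiC x).2) := by
  have h : 0 < 1 + ‖x‖ := by positivity
  simp only [psiC, ContinuousMap.coe_mk]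
  rw [Real.exp_neg, Real.exp_log h, norm_smul, norm_inv, Real.norm_of_nonneg h.le]
  field_simp
  ring

theorem psi_phi (y : P × ℝ) (hy : ‖y.1‖ = 1 - Real.exp (-y.2)) : psiC (phiC y) = y := by
  have h : 1 + ‖Real.exp y.2 • y.1‖ = Real.exp y.2 := by
    rw [norm_smul, Real.norm_of_nonneg (Real.exp_pos _).le, hy, Real.exp_neg]
    have := Real.exp_pos y.2
    field_simp
    ring
  simp only [phiC, psiC, ContinuousMap.coe_mk]
  rw [h, Real.log_exp, smul_smul, inv_mul_cancel₀ (Real.exp_pos _).ne', one_smul]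

theorem psi_lip (x y : P) (h : ℝ) (hh : h ≤ 1 / 2) (hxy : ‖x - y‖ ≤ h * (1 + ‖x‖)) :
    dist (psiC x) (psiC y) ≤ 2 * h := by
  have hx : 0 < 1 + ‖x‖ := by positivity
  have hy : 0 < 1 + ‖y‖ := by positivity
  have hn := abs_norm_sub_norm_le x y
  have hn1 := abs_le.mp hn
  have h0 : 0 ≤ h := by
    by_contra hc
    push Not at hc
    nlinarith [norm_nonneg (x - y)]
  rw [Prod.dist_eq]
  simp only [psiC, ContinuousMap.coe_mk]
  apply max_le
  · rw [dist_eq_norm]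
    have e : (1 + ‖x‖)⁻¹ • x - (1 + ‖y‖)⁻¹ • y
        = (1 + ‖x‖)⁻¹ • (x - y) + ((1 + ‖x‖)⁻¹ - (1 + ‖y‖)⁻¹) • y := by
      rw [smul_sub, sub_smul]; abel
    rw [e]
    refine (norm_add_le _ _).trans ?_
    have h1 : ‖(1 + ‖x‖)⁻¹ • (x - y)‖ ≤ h := by
      rw [norm_smul, norm_inv, Real.norm_of_nonneg hx.le, inv_mul_le_iff₀ hx]
      linarith
    have h2 : ‖((1 + ‖x‖)⁻¹ - (1 + ‖y‖)⁻¹) • y‖ ≤ h := by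
      rw [norm_smul, inv_sub_inv hx.ne' hy.ne', Real.norm_eq_abs, abs_div,
        abs_of_pos (mul_pos hx hy), div_mul_eq_mul_div, div_le_iff₀ (mul_pos hx hy)]
      have h3 : |1 + ‖y‖ - (1 + ‖x‖)| ≤ h * (1 + ‖x‖) := by
        rw [abs_le]; constructor <;> linarith [hn1.1, hn1.2]
      have h4 : (0:ℝ) ≤ h * (1 + ‖x‖) := by positivity
      nlinarith [norm_nonneg y, abs_nonneg (1 + ‖y‖ - (1 + ‖x‖))]
    linarith
  · rw [Real.dist_eq, abs_le]
    have k1 : Real.log (1 + ‖x‖) - Real.log (1 + ‖y‖) ≤ 2 * h := by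
      rw [← Real.log_div hx.ne' hy.ne']
      refine (Real.log_le_sub_one_of_pos (div_pos hx hy)).trans ?_
      rw [sub_le_iff_le_add, div_le_iff₀ hy]
      nlinarith [hn1.1, hn1.2]
    have k2 : Real.log (1 + ‖y‖) - Real.log (1 + ‖x‖) ≤ 2 * h := by
      rw [← Real.log_div hy.ne' hx.ne']
      refine (Real.log_le_sub_one_of_pos (div_pos hy hx)).trans ?_
      rw [sub_le_iff_le_add, div_le_iff₀ hx]
      nlinarith [hn1.1, hn1.2]
    constructor <;> linarith

/-- Path version of the linear growth descent step. -/
theorem descent_step (F : P → ℝ) (G : P → P)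
    (hF : ∀ p, HasFDerivAt F (innerSL ℝ (G p)) p) (hG : Continuous G)
    (c ε δ : ℝ) (hε : 0 < ε) (hδ : 0 < δ)
    (hPS : ∀ u, |F u - c| ≤ ε → δ ≤ (1 + ‖u‖) * ‖G u‖)
    (γ : C(unitInterval, P)) (h0 : F (γ 0) ≤ c - ε) (h1 : F (γ 1) ≤ c - ε)
    (hmax : ∀ t, F (γ t) ≤ c + ε) (M : ℝ) (hM : ∀ t, F (γ t) ≤ M) (hcM : c ≤ M) :
    ∃ (h : ℝ) (σ : C(unitInterval, P)), 0 < h ∧ h ≤ 1 / 2 ∧ σ 0 = γ 0 ∧ σ 1 = γ 1 ∧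
      (∀ t, ‖γ t - σ t‖ ≤ h * (1 + ‖γ t‖)) ∧ ∀ t, F (σ t) ≤ M - 3 / 4 * h * δ := by
  have hFc : Continuous F := continuous_iff_continuousAt.mpr fun p => (hF p).continuousAt
  let χ : P → ℝ := fun u => max 0 (min 1 ((F u - c + ε) * (2 / ε)))
  have hχc : Continuous χ := by fun_prop
  have hχ0 : ∀ u, 0 ≤ χ u := fun u => le_max_left _ _
  have hχ1 : ∀ u, χ u ≤ 1 := fun u => max_le zero_le_one (min_le_left _ _)
  have hχlow : ∀ u, F u ≤ c - ε → χ u = 0 := by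
    intro u hu
    apply max_eq_left
    apply (min_le_right _ _).trans
    apply mul_nonpos_of_nonpos_of_nonneg
    · linarith
    · positivity
  have hχhigh : ∀ u, c - ε / 2 ≤ F u → χ u = 1 := by
    intro u hu
    have : 1 ≤ (F u - c + ε) * (2 / ε) := by
      rw [mul_div_assoc', le_div_iff₀ hε]; linarith
    simp only [χ]
    rw [min_eq_left this]
    exact max_eq_right zero_le_one
  let V : P → P := fun u => (-(χ u * (1 + ‖u‖) ^ 2 / max ((1 + ‖u‖) * ‖G u‖) δ)) • G u
  have hmaxpos : ∀ u, 0 < max ((1 + ‖u‖) * ‖G u‖) δ := fun u => lt_max_of_lt_right hδ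
  have hVc : Continuous V := by
    apply Continuous.smul _ hG
    apply Continuous.neg
    apply Continuous.div
    · fun_prop
    · fun_prop
    · exact fun u => (hmaxpos u).ne'
  have hVnorm : ∀ u, ‖V u‖ ≤ 1 + ‖u‖ := by
    intro u
    have hu : 0 < 1 + ‖u‖ := by positivity
    simp only [V]
    rw [norm_smul, norm_neg, Real.norm_of_nonneg (by have := hχ0 u; have := hmaxpos u; positivity),
      div_mul_eq_mul_div, div_le_iff₀ (hmaxpos u)]
    have e1 : (1 + ‖u‖) * ‖G u‖ ≤ max ((1 + ‖u‖) * ‖G u‖) δ := le_max_left _ _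
    calc χ u * (1 + ‖u‖) ^ 2 * ‖G u‖ = χ u * ((1 + ‖u‖) * ((1 + ‖u‖) * ‖G u‖)) := by ring
      _ ≤ 1 * ((1 + ‖u‖) * ((1 + ‖u‖) * ‖G u‖)) := by
          apply mul_le_mul_of_nonneg_right (hχ1 u); positivity
      _ ≤ (1 + ‖u‖) * max ((1 + ‖u‖) * ‖G u‖) δ := by
          rw [one_mul]; exact mul_le_mul_of_nonneg_left e1 hu.le
  have hslope : ∀ u, F u ≤ c + ε → inner ℝ (G u) (V u) ≤ - (χ u * δ) := by
    intro u hu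
    by_cases hlow : F u ≤ c - ε
    · simp [V, hχlow u hlow]
    · push Not at hlow
      have h2 := hPS u (by rw [abs_le]; constructor <;> linarith)
      simp only [V]
      rw [inner_smul_right, real_inner_self_eq_norm_sq, max_eq_left h2]
      have hu' : 0 < 1 + ‖u‖ := by positivity
      have hg : 0 < ‖G u‖ := by
        by_contra hc
        push Not at hc
        nlinarith
      have e : -(χ u * (1 + ‖u‖) ^ 2 / ((1 + ‖u‖) * ‖G u‖)) * ‖G u‖ ^ 2
          = - (χ u * ((1 + ‖u‖) * ‖G u‖)) := by
        field_simp
      rw [e]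
      have := mul_le_mul_of_nonneg_left h2 (hχ0 u)
      linarith
  let K : ℝ → unitInterval → ℝ := fun s t => inner ℝ (G (γ t + s • V (γ t))) (V (γ t))
  have hKc : Continuous fun x : ℝ × unitInterval => K x.1 x.2 := by
    have hVγ : Continuous fun x : ℝ × unitInterval => V (γ x.2) :=
      hVc.comp (γ.continuous.comp continuous_snd)
    have hγ : Continuous fun x : ℝ × unitInterval => γ x.2 := γ.continuous.comp continuous_snd
    exact (hG.comp (hγ.add (continuous_fst.smul hVγ))).inner hVγ
  have hev : ∀ᶠ s in 𝓝 (0:ℝ), ∀ t ∈ (Set.univ : Set unitInterval), K s t < K 0 t + δ / 4 := by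
    apply isCompact_univ.eventually_forall_of_forall_eventually
    intro t _
    have hc1 : Continuous fun x : ℝ × unitInterval => K x.1 x.2 - K 0 x.2 :=
      hKc.sub (hKc.comp (continuous_const.prodMk continuous_snd))
    have := hc1.continuousAt (x := ((0:ℝ), t))
    have h3 := this.eventually_lt (continuousAt_const (y := δ / 4)) (by simp; positivity)
    filter_upwards [h3] with x hx
    linarith
  obtain ⟨h₀, hh₀, hball⟩ := Metric.eventually_nhds_iff.mp hev
  set h : ℝ := min (h₀ / 2) (min (1 / 2) (ε / (2 * δ))) with hh
  have hpos : 0 < h := by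
    apply lt_min (by positivity) (lt_min (by positivity) (by positivity))
  have hle1 : h ≤ h₀ / 2 := min_le_left _ _
  have hle2 : h ≤ 1 / 2 := (min_le_right _ _).trans (min_le_left _ _)
  have hle3 : h * δ ≤ ε / 2 := by
    have : h ≤ ε / (2 * δ) := (min_le_right _ _).trans (min_le_right _ _)
    rw [le_div_iff₀ (by positivity)] at this
    linarith
  refine ⟨h, ⟨fun t => γ t + h • V (γ t), ?_⟩, hpos, hle2, ?_, ?_, ?_, ?_⟩
  · exact γ.continuous.add ((hVc.comp γ.continuous).const_smul h)
  · simp [V, hχlow _ h0]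
  · simp [V, hχlow _ h1]
  · intro t
    simp only [ContinuousMap.coe_mk, sub_add_cancel_left, norm_neg]
    rw [norm_smul, Real.norm_of_nonneg hpos.le]
    exact mul_le_mul_of_nonneg_left (hVnorm _) hpos.le
  · intro t
    simp only [ContinuousMap.coe_mk]
    have hder : ∀ s : ℝ, HasDerivAt (fun s : ℝ => F (γ t + s • V (γ t))) (K s t) s := by
      intro s
      have hl : HasDerivAt (fun s : ℝ => γ t + s • V (γ t)) (V (γ t)) s := by
        simpa using ((hasDerivAt_id s).smul_const (V (γ t))).const_add (γ t)
      have := (hF (γ t + s • V (γ t))).comp_hasDerivAt s hl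
      exact this
    obtain ⟨s, hs, hse⟩ := exists_hasDerivAt_eq_slope (fun s : ℝ => F (γ t + s • V (γ t)))
      (fun s => K s t) hpos (fun s _ => (hder s).continuousAt.continuousWithinAt)
      (fun s _ => hder s)
    have hs2 := hball (y := s) (by
      rw [Real.dist_eq, sub_zero, abs_of_pos hs.1]; linarith [hs.2]) t (Set.mem_univ t)
    simp only [zero_smul, add_zero, sub_zero] at hse
    rw [eq_div_iff hpos.ne'] at hse
    have hK0 : K 0 t ≤ - (χ (γ t) * δ) := by
      simp only [K, zero_smul, add_zero]
      exact hslope _ (hmax t)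
    have hkey : F (γ t + h • V (γ t)) ≤ F (γ t) + (- (χ (γ t) * δ) + δ / 4) * h := by
      have := mul_le_mul_of_nonneg_right (hs2.le.trans (by linarith : K 0 t + δ / 4 ≤ - (χ (γ t) * δ) + δ / 4)) hpos.le
      linarith
    by_cases hhi : c - ε / 2 ≤ F (γ t)
    · rw [hχhigh _ hhi] at hkey
      have := hM t
      nlinarith
    · push Not at hhi
      have : 0 ≤ χ (γ t) * δ * h := by have := hχ0 (γ t); positivity
      nlinarith

theorem mp_cerami_contra [CompleteSpace P] (F : P → ℝ) (G : P → P)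
    (hF : ∀ p, HasFDerivAt F (innerSL ℝ (G p)) p) (hG : Continuous G)
    (c ε δ : ℝ) (hε : 0 < ε) (hδ : 0 < δ)
    (hPS : ∀ u, |F u - c| ≤ ε → δ ≤ (1 + ‖u‖) * ‖G u‖)
    (γ₀ : C(unitInterval, P)) (h0 : F (γ₀ 0) ≤ c - ε) (h1 : F (γ₀ 1) ≤ c - ε)
    (hmax : ∀ t, F (γ₀ t) ≤ c + ε)
    (hlow : ∀ γ : C(unitInterval, P), γ 0 = γ₀ 0 → γ 1 = γ₀ 1 → ∃ t, c ≤ F (γ t)) : False := by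
  have hFc : Continuous F := continuous_iff_continuousAt.mpr fun p => (hF p).continuousAt
  let FC : C(P, ℝ) := ⟨F, hFc⟩
  let S : Set C(unitInterval, P × ℝ) := {η | (∀ t, ‖(η t).1‖ = 1 - Real.exp (-(η t).2)) ∧
    η 0 = psiC (γ₀ 0) ∧ η 1 = psiC (γ₀ 1)}
  have hev : ∀ t, Continuous fun η : C(unitInterval, P × ℝ) => η t :=
    fun t => continuous_eval_const t
  have hS : IsClosed S := by
    apply IsClosed.and
    · simp only [Set.ofPred_forall]
      apply isClosed_iInter
      intro t
      apply isClosed_eq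
      · exact (continuous_fst.comp (hev t)).norm
      · exact continuous_const.sub (Real.continuous_exp.comp (continuous_snd.comp (hev t)).neg)
    · exact (isClosed_eq (hev 0) continuous_const).and (isClosed_eq (hev 1) continuous_const)
  have : CompleteSpace S := hS.completeSpace_coe
  let Φ : S → ℝ := fun η => supC (FC.comp (phiC.comp η.1))
  have hΦ : Continuous Φ := by
    apply continuous_supC.comp
    apply (ContinuousMap.continuous_postcomp FC).comp
    apply (ContinuousMap.continuous_postcomp phiC).comp
    exact continuous_subtype_val
  have hlift : ∀ γ : C(unitInterval, P), γ 0 = γ₀ 0 → γ 1 = γ₀ 1 → psiC.comp γ ∈ S := by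
    intro γ hg0 hg1
    refine ⟨fun t => psi_constraint (γ t), ?_, ?_⟩
    · simp [hg0]
    · simp [hg1]
  have hend : ∀ η : S, (phiC.comp η.1) 0 = γ₀ 0 ∧ (phiC.comp η.1) 1 = γ₀ 1 := by
    intro η
    constructor
    · rw [ContinuousMap.comp_apply, η.2.2.1, phi_psi]
    · rw [ContinuousMap.comp_apply, η.2.2.2, phi_psi]
  have hlowΦ : ∀ η : S, c ≤ Φ η := by
    intro η
    obtain ⟨t, ht⟩ := hlow (phiC.comp η.1) (hend η).1 (hend η).2
    exact ht.trans (le_supC (FC.comp (phiC.comp η.1)) t)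
  let η₀ : S := ⟨psiC.comp γ₀, hlift γ₀ rfl rfl⟩
  obtain ⟨η, hη1, hη2⟩ := ekeland_weak Φ hΦ c hlowΦ (δ / 4) (by positivity) η₀
  have hη₀ : Φ η₀ ≤ c + ε := by
    apply supC_le
    intro t
    have : (FC.comp (phiC.comp (psiC.comp γ₀))) t = F (γ₀ t) := by
      simp [FC, phi_psi]
    rw [show η₀.1 = psiC.comp γ₀ from rfl, this]
    exact hmax t
  set γ : C(unitInterval, P) := phiC.comp η.1 with hγ
  have hγM : ∀ t, F (γ t) ≤ Φ η := fun t => le_supC (FC.comp (phiC.comp η.1)) t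
  obtain ⟨h, σ, hpos, hhalf, hs0, hs1, hdist, hdec⟩ := descent_step F G hF hG c ε δ hε hδ hPS γ
    (by rw [(hend η).1]; exact h0) (by rw [(hend η).2]; exact h1)
    (fun t => (hγM t).trans (hη1.trans hη₀)) (Φ η) hγM (hlowΦ η)
  let ησ : S := ⟨psiC.comp σ, hlift σ (hs0.trans (hend η).1) (hs1.trans (hend η).2)⟩
  have hΦσ : Φ ησ ≤ Φ η - 3 / 4 * h * δ := by
    apply supC_le
    intro t
    have : (FC.comp (phiC.comp (psiC.comp σ))) t = F (σ t) := by
      simp [FC, phi_psi]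
    rw [show ησ.1 = psiC.comp σ from rfl, this]
    exact hdec t
  have hd : dist η ησ ≤ 2 * h := by
    rw [Subtype.dist_eq, ContinuousMap.dist_le (by positivity)]
    intro t
    have h2 := psi_lip (γ t) (σ t) h hhalf (hdist t)
    rwa [show psiC (γ t) = η.1 t from psi_phi _ (η.2.1 t)] at h2
  have h3 := hη2 ησ
  nlinarith

end Weight

theorem interior_min (f f' : ℝ → ℝ) (hf : ∀ t, HasDerivAt f (f' t) t) (a b : ℝ) (hab : a < b)
    (ha : f' a < 0) (hle : f a ≤ f b) : ∃ x, a < x ∧ x < b ∧ f' x = 0 ∧ f x < f b := by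
  have hc : Continuous f := continuous_iff_continuousAt.mpr fun t => (hf t).continuousAt
  obtain ⟨z, hz1, hz2⟩ : ∃ z ∈ Set.Ioo a b, f z < f a := by
    have h1 := (hasDerivAt_iff_tendsto_slope.mp (hf a)).eventually (gt_mem_nhds ha)
    have h2 : ∀ᶠ z in 𝓝[>] a, slope f a z < 0 :=
      h1.filter_mono (nhdsWithin_mono a fun z hz => ne_of_gt hz)
    obtain ⟨z, hz, hz'⟩ := (h2.and (Ioo_mem_nhdsGT hab)).exists
    refine ⟨z, hz', ?_⟩
    rw [slope_def_field] at hz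
    have hza : 0 < z - a := sub_pos.mpr hz'.1
    rw [div_lt_iff₀ hza] at hz
    linarith
  obtain ⟨x, hx, hmin⟩ := isCompact_Icc.exists_isMinOn (Set.nonempty_Icc.mpr hab.le)
    (hc.continuousOn (s := Set.Icc a b))
  have hxz : f x ≤ f z := hmin (Set.Ioo_subset_Icc_self hz1)
  have hxa : x ≠ a := by rintro rfl; linarith
  have hxb : x ≠ b := by rintro rfl; linarith
  have h1 : a < x := lt_of_le_of_ne hx.1 hxa.symm
  have h2 : x < b := lt_of_le_of_ne hx.2 hxb
  refine ⟨x, h1, h2, ?_, by linarith⟩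
  have : IsLocalMin f x := by
    filter_upwards [Icc_mem_nhds h1 h2] with y hy using hmin hy
  exact this.hasDerivAt_eq_zero (hf x)

set_option linter.unusedSectionVars false

section Main
variable {P Q : Type*}
  [NormedAddCommGroup P] [InnerProductSpace ℝ P] [CompleteSpace P]
  [NormedAddCommGroup Q] [NormedSpace ℝ Q] [CompleteSpace Q]
  {I : P × Q → ℝ} {r a : ℝ} {m : P → P × Q}

theorem m_lt (hI : HypI I r a) (hm : IsMMap I m) (p : P) (q : Q) (hq : q ≠ (m p).2) :
    I (m p) < I (p, q) := by
  have h := hI.i5 (m p) (hm.mem p).1 (q - (m p).2) (sub_ne_zero.mpr hq)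
  have e : m p + (0, q - (m p).2) = (p, q) := by
    ext
    · simp [(hm.mem p).2]
    · simp
  rwa [e] at h

theorem m_eq (hm : IsMMap I m) (p : P) : (p, (m p).2) = m p := by
  ext
  · simp [(hm.mem p).2]
  · simp

theorem m_le (hI : HypI I r a) (hm : IsMMap I m) (p : P) (q : Q) : I (m p) ≤ I (p, q) := by
  by_cases hq : q = (m p).2
  · rw [hq, m_eq hm]
  · exact (m_lt hI hm p q hq).le

theorem I_cont (hI : HypI I r a) : Continuous I := hI.i1.1.continuous

theorem m_cont (hI : HypI I r a) (hm : IsMMap I m) : Continuous m := by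
  have hIc := I_cont hI
  rw [continuous_iff_seqContinuous]
  intro x p hx
  apply tendsto_of_subseq_tendsto
  intro ns hns
  have hy : Tendsto (fun n => x (ns n)) atTop (nhds p) := hx.comp hns
  set y : ℕ → P := fun n => x (ns n) with hydef
  have hI0 : Tendsto (fun n => I (y n, (0 : Q))) atTop (nhds (I (p, 0))) :=
    (hIc.tendsto (p, (0 : Q))).comp (hy.prodMk_nhds tendsto_const_nhds)
  obtain ⟨B1, hB1⟩ := hI0.bddAbove_range
  obtain ⟨B2, hB2⟩ := hy.norm.bddAbove_range
  obtain ⟨R, hR⟩ := hI.i4 (B1 + B2 + 1)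
  have hbd : ∀ n, ‖(m (y n)).2‖ ≤ R := by
    intro n
    by_contra hcon
    push Not at hcon
    have h1 : R ≤ XNorm (m (y n)) := by
      refine hcon.le.trans ?_
      apply Real.le_sqrt_of_sq_le
      nlinarith [sq_nonneg ‖(m (y n)).1‖]
    have h2 := hR _ h1
    rw [(hm.mem (y n)).2] at h2
    have h3 := m_le hI hm (y n) 0
    have h4 : I (y n, (0 : Q)) ≤ B1 := hB1 ⟨n, rfl⟩
    have h5 : ‖y n‖ ≤ B2 := hB2 ⟨n, rfl⟩
    linarith
  obtain ⟨v, φ, hφ, hv⟩ := weak_seq_compact hI.refl (fun n => (m (y n)).2) R hbd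
  have hyφ : Tendsto (fun n => y (φ n)) atTop (nhds p) := hy.comp hφ.tendsto_atTop
  have hT : TConv (fun n => m (y (φ n))) (p, v) := by
    refine ⟨?_, hv⟩
    simpa only [(hm.mem _).2] using hyφ
  have hup : Tendsto (fun n => I (y (φ n), (m p).2)) atTop (nhds (I (m p))) := by
    have := (hIc.tendsto (p, (m p).2)).comp (hyφ.prodMk_nhds (tendsto_const_nhds (x := (m p).2)))
    rw [m_eq hm] at this
    exact this
  have hveq : v = (m p).2 := by
    by_contra hne
    obtain ⟨c, hc1, hc2⟩ := exists_between (m_lt hI hm p v hne)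
    have h1 := hI.i2 _ _ hT c hc2
    have : c ≤ I (m p) := by
      apply ge_of_tendsto hup
      filter_upwards [h1] with n hn
      exact hn.le.trans (m_le hI hm _ _)
    linarith
  rw [hveq, m_eq hm] at hT
  refine ⟨φ, hI.i3 _ _ hT ?_⟩
  rw [tendsto_order]
  constructor
  · intro c hc
    exact hI.i2 _ _ hT c hc
  · intro c hc
    filter_upwards [hup.eventually (gt_mem_nhds hc)] with n hn
    exact (m_le hI hm _ _).trans_lt hn

theorem m_zero (hI : HypI I r a) (hm : IsMMap I m) : m 0 = 0 := by
  symm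
  apply hm.uniq 0 0 _ rfl
  have : IsLocalMin I 0 := by
    apply Filter.Eventually.of_forall
    intro x
    rw [hI.i1.2.1]
    exact hI.i1.2.2 x
  intro v
  rw [this.fderiv_eq_zero]
  rfl

/-- The partial derivative of `I` at `m p` in the direction of `P`. -/
def DI (I : P × Q → ℝ) (m : P → P × Q) (p : P) : P →L[ℝ] ℝ :=
  (fderiv ℝ I (m p)).comp (ContinuousLinearMap.inl ℝ P Q)

/-- The gradient of the reduced functional. -/
def Grad (I : P × Q → ℝ) (m : P → P × Q) (p : P) : P :=
  p - (InnerProductSpace.toDual ℝ P).symm (DI I m p)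

theorem Grad_cont (hI : HypI I r a) (hm : IsMMap I m) : Continuous (Grad I m) := by
  have h1 : Continuous (DI I m) := by
    have h2 : Continuous fun p => fderiv ℝ I (m p) :=
      (hI.i1.1.continuous_fderiv one_ne_zero).comp (m_cont hI hm)
    exact h2.clm_comp continuous_const
  exact continuous_id.sub ((InnerProductSpace.toDual ℝ P).symm.continuous.comp h1)

theorem innerSL_Grad (p : P) : innerSL ℝ (Grad I m p) = innerSL ℝ p - DI I m p := by
  ext w
  simp [Grad]

theorem Im_hasFDerivAt (hI : HypI I r a) (hm : IsMMap I m) (p : P) :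
    HasFDerivAt (fun p => I (m p)) (DI I m p) p := by
  have hs : HasStrictFDerivAt I (fderiv ℝ I (m p)) (m p) :=
    hI.i1.1.contDiffAt.hasStrictFDerivAt one_ne_zero
  have hmc := m_cont hI hm
  rw [hasFDerivAt_iff_isLittleO, Asymptotics.isLittleO_iff]
  intro c hc
  have hb := Asymptotics.isLittleO_iff.mp hs.isLittleO hc
  have t1 : Tendsto (fun q : P => ((q, (m p).2), (p, (m p).2))) (𝓝 p) (𝓝 (m p, m p)) := by
    have : Continuous (fun q : P => ((q, (m p).2), (p, (m p).2))) := by fun_prop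
    have h := this.tendsto p
    simp only [m_eq hm] at h
    simpa only [m_eq hm] using h
  have t2 : Tendsto (fun q : P => (m q, (p, (m q).2))) (𝓝 p) (𝓝 (m p, m p)) := by
    have : Continuous (fun q : P => (m q, (p, (m q).2))) := by fun_prop
    have h := this.tendsto p
    rwa [m_eq hm] at h
  filter_upwards [t1.eventually hb, t2.eventually hb] with q h1 h2
  have e1 : ((q, (m p).2) : P × Q) - (p, (m p).2) = (q - p, 0) := by simp
  have e2 : m q - (p, (m q).2) = (q - p, 0) := by
    rw [← m_eq hm q]; simp
  have en : ‖((q - p, 0) : P × Q)‖ = ‖q - p‖ := by simp [Prod.norm_def]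
  simp only [e1, en] at h1
  simp only [e2, en] at h2
  rw [m_eq hm] at h1
  have hD : DI I m p (q - p) = fderiv ℝ I (m p) (q - p, 0) := by simp [DI]
  rw [hD]
  have k1 := m_le hI hm q (m p).2
  have k2 := m_le hI hm p (m q).2
  rw [Real.norm_eq_abs, abs_le] at h1 h2 ⊢
  constructor <;> linarith [h1.1, h1.2, h2.1, h2.2]

/-- The reduced functional. -/
def Fj (I : P × Q → ℝ) (m : P → P × Q) (p : P) : ℝ := Jfun I (m p)

theorem Fj_hasFDerivAt (hI : HypI I r a) (hm : IsMMap I m) (p : P) :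
    HasFDerivAt (Fj I m) (innerSL ℝ (Grad I m p)) p := by
  have h1 : HasFDerivAt (fun p : P => ‖p‖ ^ 2 / 2) (innerSL ℝ p) p := by
    have := (hasStrictFDerivAt_norm_sq p).hasFDerivAt.mul_const (1 / 2 : ℝ)
    have e1 : (fun p : P => ‖p‖ ^ 2 / 2) = fun p : P => ‖p‖ ^ 2 * (1 / 2 : ℝ) := by
      funext w; ring
    have e2 : innerSL ℝ p = (1 / 2 : ℝ) • (2 • innerSL ℝ p) := by
      ext w; simp
    rw [e1, e2]
    exact this
  have h2 := h1.sub (Im_hasFDerivAt hI hm p)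
  rw [innerSL_Grad]
  have e : Fj I m = fun p => ‖p‖ ^ 2 / 2 - I (m p) := by
    ext p
    simp [Fj, Jfun, (hm.mem p).2]
  rw [e]
  exact h2

theorem Fj_cont (hI : HypI I r a) (hm : IsMMap I m) : Continuous (Fj I m) :=
  continuous_iff_continuousAt.mpr fun p => (Fj_hasFDerivAt hI hm p).continuousAt

theorem Fj_zero (hI : HypI I r a) (hm : IsMMap I m) : Fj I m 0 = 0 := by
  simp [Fj, m_zero hI hm, Jfun, hI.i1.2.1]

theorem fderiv_J (hI : HypI I r a) (u : P × Q) :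
    fderiv ℝ (Jfun I) u u = ‖u.1‖ ^ 2 - fderiv ℝ I u u := by
  have h1 : HasFDerivAt (fun u : P × Q => ‖u.1‖ ^ 2 / 2)
      ((innerSL ℝ u.1).comp (ContinuousLinearMap.fst ℝ P Q)) u := by
    have := ((hasStrictFDerivAt_norm_sq u.1).hasFDerivAt.comp u
      (hasFDerivAt_fst (𝕜 := ℝ) (p := u))).mul_const (1 / 2 : ℝ)
    have e1 : (fun u : P × Q => ‖u.1‖ ^ 2 / 2) = fun u : P × Q => ‖u.1‖ ^ 2 * (1 / 2 : ℝ) := by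
      funext w; ring
    have e2 : (innerSL ℝ u.1).comp (ContinuousLinearMap.fst ℝ P Q)
        = (1 / 2 : ℝ) • ((2 • innerSL ℝ u.1).comp (ContinuousLinearMap.fst ℝ P Q)) := by
      ext w <;> simp
    rw [e1, e2]
    exact this
  have h2 : HasFDerivAt I (fderiv ℝ I u) u :=
    ((hI.i1.1.differentiable one_ne_zero) u).hasFDerivAt
  have h3 : HasFDerivAt (Jfun I) _ u := h1.sub h2
  rw [h3.fderiv]
  simp

theorem fderiv_I_m (hm : IsMMap I m) (p : P) : fderiv ℝ I (m p) (m p) = DI I m p p := by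
  have e : m p = (p, 0) + (0, (m p).2) := by
    ext
    · simp [(hm.mem p).2]
    · simp
  have : fderiv ℝ I (m p) ((p, 0) + (0, (m p).2)) = fderiv ℝ I (m p) (p, 0) := by
    rw [map_add, (hm.mem p).1, add_zero]
  rw [← e] at this
  rw [this]
  simp [DI]

theorem inner_Grad (p w : P) : inner ℝ (Grad I m p) w = inner ℝ p w - DI I m p w := by
  have := congrArg (fun L => L w) (innerSL_Grad (I := I) (m := m) p)
  simpa using this

theorem mem_N_iff (hI : HypI I r a) (hm : IsMMap I m) (p : P) :
    m p ∈ NSet I ↔ p ≠ 0 ∧ inner ℝ (Grad I m p) p = 0 := by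
  have : m p ∈ NSet I ↔ m p ∈ MSet I ∧ (m p).1 ≠ 0 ∧ fderiv ℝ (Jfun I) (m p) (m p) = 0 := Iff.rfl
  rw [this, fderiv_J hI, fderiv_I_m hm, (hm.mem p).2, inner_Grad, real_inner_self_eq_norm_sq]
  simp [(hm.mem p).1]

theorem ray_max (hI : HypI I r a) (hm : IsMMap I m) (p : P) (hp : m p ∈ NSet I) (t : ℝ)
    (ht : 0 ≤ t) : Fj I m (t • p) ≤ Fj I m p := by
  have h := hI.i8 (m p) hp t ht ((m (t • p)).2 - t • (m p).2)
  have e : t • m p + (0, (m (t • p)).2 - t • (m p).2) = m (t • p) := by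
    ext
    · simp [(hm.mem _).2]
    · simp
  rw [e] at h
  have h2 := hp.2.2
  rw [fderiv_J hI, (hm.mem p).2] at h2
  have h3 : fderiv ℝ I (m p) (m p) = ‖p‖ ^ 2 := by linarith
  rw [h3] at h
  simp only [Fj, Jfun, (hm.mem _).2, norm_smul, Real.norm_of_nonneg ht]
  nlinarith

theorem Fj_ge (hI : HypI I r a) (hm : IsMMap I m) (p : P) (hp : ‖p‖ = r) : a ≤ Fj I m p := by
  have hbd : BddBelow {y : ℝ | ∃ p : P, ‖p‖ = r ∧ y = Jfun I (p, 0)} := by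
    by_contra hcon
    have := Real.sInf_of_not_bddBelow hcon
    rw [← hI.i6.2.1] at this
    linarith [hI.i6.2.2]
  have h1 : a ≤ Jfun I (p, 0) := by
    rw [hI.i6.2.1]
    exact csInf_le hbd ⟨p, hp, rfl⟩
  have h2 := m_le hI hm p 0
  simp only [Fj, Jfun, (hm.mem p).2] at *
  linarith

theorem exists_sphere (hI : HypI I r a) : ∃ p : P, ‖p‖ = r := by
  by_contra hcon
  push Not at hcon
  have : {y : ℝ | ∃ p : P, ‖p‖ = r ∧ y = Jfun I (p, 0)} = ∅ := by
    ext y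
    simp only [Set.mem_ofPred_eq, Set.mem_empty_iff_false, iff_false]
    rintro ⟨p, hp, -⟩
    exact hcon p hp
  have h := hI.i6.2.1
  rw [this, Real.sInf_empty] at h
  linarith [hI.i6.2.2]

theorem ray_deriv (hI : HypI I r a) (hm : IsMMap I m) (p : P) (t : ℝ) :
    HasDerivAt (fun t : ℝ => Fj I m (t • p)) (inner ℝ (Grad I m (t • p)) p) t := by
  have hl : HasDerivAt (fun s : ℝ => s • p) p t := by
    simpa using (hasDerivAt_id t).smul_const p
  exact (Fj_hasFDerivAt hI hm (t • p)).comp_hasDerivAt t hl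

theorem ray_crit (hI : HypI I r a) (hm : IsMMap I m) (p : P) (hp : p ≠ 0) (t : ℝ) (ht : 0 < t)
    (h0 : inner ℝ (Grad I m (t • p)) p = 0) (s : ℝ) (hs : 0 ≤ s) :
    Fj I m (s • p) ≤ Fj I m (t • p) := by
  have hN : m (t • p) ∈ NSet I := by
    rw [mem_N_iff hI hm]
    refine ⟨smul_ne_zero ht.ne' hp, ?_⟩
    rw [inner_smul_right, h0, mul_zero]
  have := ray_max hI hm (t • p) hN (s / t) (by positivity)
  rwa [smul_smul, div_mul_cancel₀ _ ht.ne'] at this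

theorem neg_of_neg (hI : HypI I r a) (hm : IsMMap I m) (p : P) (h : Fj I m p < 0) :
    inner ℝ (Grad I m p) p < 0 := by
  have hp : p ≠ 0 := by rintro rfl; rw [Fj_zero hI hm] at h; exact lt_irrefl _ h
  have hz := Fj_zero hI hm
  by_contra hcon
  push Not at hcon
  rcases hcon.eq_or_lt with h0 | hpos
  · have := ray_crit hI hm p hp 1 one_pos (by rw [one_smul]; exact h0.symm) 0 le_rfl
    rw [zero_smul, one_smul, hz] at this
    linarith
  · obtain ⟨x, hx1, hx2, hx3, hx4⟩ := interior_min (fun t => Fj I m ((-t) • p))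
      (fun t => -(inner ℝ (Grad I m ((-t) • p)) p))
      (fun t => by
        have := (ray_deriv hI hm p (-t)).comp t (hasDerivAt_neg t)
        simpa [Function.comp_def] using this)
      (-1) 0 (by norm_num) (by simpa using hpos) (by simp [hz]; exact h.le)
    have := ray_crit hI hm p hp (-x) (by linarith) (by linarith) 0 le_rfl
    simp only [neg_zero] at hx4
    linarith

theorem pos_of_small (hI : HypI I r a) (hm : IsMMap I m) (p : P) (hp : p ≠ 0) (hpr : ‖p‖ < r)
    (h : Fj I m p < a) : 0 < inner ℝ (Grad I m p) p := by
  have hn : 0 < ‖p‖ := norm_pos_iff.mpr hp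
  have hr := hI.i6.1
  have hsph : a ≤ Fj I m ((r / ‖p‖) • p) := by
    apply Fj_ge hI hm
    rw [norm_smul, Real.norm_of_nonneg (by positivity), div_mul_cancel₀ _ hn.ne']
  by_contra hcon
  push Not at hcon
  rcases hcon.eq_or_lt with h0 | hneg
  · have := ray_crit hI hm p hp 1 one_pos (by rw [one_smul]; exact h0) (r / ‖p‖) (by positivity)
    rw [one_smul] at this
    linarith
  · obtain ⟨x, hx1, hx2, hx3, hx4⟩ := interior_min (fun t => Fj I m (t • p))
      (fun t => inner ℝ (Grad I m (t • p)) p) (ray_deriv hI hm p) 1 (r / ‖p‖)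
      ((one_lt_div hn).mpr hpr) (by simpa using hneg) (by simp only [one_smul]; linarith)
    have := ray_crit hI hm p hp x (by linarith) hx3 (r / ‖p‖) (by positivity)
    linarith

theorem crossing (hI : HypI I r a) (hm : IsMMap I m) (σ : C(unitInterval, P)) (h0 : σ 0 = 0)
    (h1 : Fj I m (σ 1) < 0) : ∃ t, m (σ t) ∈ NSet I := by
  have hz := Fj_zero hI hm
  have hσ1 : σ 1 ≠ 0 := by intro h; rw [h, hz] at h1; exact lt_irrefl _ h1
  have hev : ∀ᶠ p in 𝓝 (0 : P), Fj I m p < a := by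
    have := (Fj_cont hI hm).tendsto 0
    rw [hz] at this
    exact this.eventually (gt_mem_nhds hI.i6.2.2)
  obtain ⟨ρ₀, hρ₀, hball⟩ := Metric.eventually_nhds_iff.mp hev
  set ρ := min (ρ₀ / 2) (min (r / 2) (‖σ 1‖ / 2)) with hρ
  have hr := hI.i6.1
  have hn1 : 0 < ‖σ 1‖ := norm_pos_iff.mpr hσ1
  have hρpos : 0 < ρ := lt_min (by positivity) (lt_min (by positivity) (by positivity))
  have hρ1 : ρ ≤ ρ₀ / 2 := min_le_left _ _
  have hρ2 : ρ ≤ r / 2 := (min_le_right _ _).trans (min_le_left _ _)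
  have hρ3 : ρ ≤ ‖σ 1‖ / 2 := (min_le_right _ _).trans (min_le_right _ _)
  have hnc : Continuous fun t : unitInterval => ‖σ t‖ := σ.continuous.norm
  have hAc : IsCompact {t : unitInterval | ‖σ t‖ ≤ ρ} :=
    (isClosed_le hnc continuous_const).isCompact
  obtain ⟨s, hs, hsmax⟩ := hAc.exists_isGreatest ⟨0, by simp [h0, hρpos.le]⟩
  have hs' : ‖σ s‖ ≤ ρ := hs
  have hs1 : s ≤ 1 := unitInterval.le_one s
  have hsρ : ‖σ s‖ = ρ := by
    obtain ⟨t, ht, hte⟩ := intermediate_value_Icc hs1 (hnc.continuousOn)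
      (show ρ ∈ Set.Icc ‖σ s‖ ‖σ 1‖ from ⟨hs', by linarith⟩)
    have hte' : ‖σ t‖ = ρ := hte
    have : t ≤ s := hsmax (show ‖σ t‖ ≤ ρ from hte'.le)
    have : t = s := le_antisymm this ht.1
    rw [← this, hte']
  have hpos : 0 < inner ℝ (Grad I m (σ s)) (σ s) := by
    apply pos_of_small hI hm
    · rw [← norm_pos_iff, hsρ]; exact hρpos
    · rw [hsρ]; linarith
    · apply hball
      rw [dist_zero_right, hsρ]; linarith
  have hneg := neg_of_neg hI hm _ h1
  have hcont : Continuous fun t : unitInterval => inner ℝ (Grad I m (σ t)) (σ t) :=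
    ((Grad_cont hI hm).comp σ.continuous).inner σ.continuous
  obtain ⟨t, ht, hte⟩ := intermediate_value_Icc' hs1 hcont.continuousOn
    (show (0:ℝ) ∈ Set.Icc _ _ from ⟨hneg.le, hpos.le⟩)
  refine ⟨t, (mem_N_iff hI hm _).mpr ⟨?_, hte⟩⟩
  intro h
  have : t ≤ s := hsmax (show ‖σ t‖ ≤ ρ by rw [h, norm_zero]; exact hρpos.le)
  have h2 : t = s := le_antisymm this ht.1
  rw [← h2, h, norm_zero] at hsρ
  linarith

theorem exists_far (hI : HypI I r a) (hm : IsMMap I m) (p : P) (hp : p ≠ 0) :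
    ∃ T : ℝ, 0 ≤ T ∧ r < ‖T • p‖ ∧ Fj I m (T • p) < 0 := by
  have hn : 0 < ‖p‖ := norm_pos_iff.mpr hp
  have ht : Tendsto (fun n : ℕ => (n : ℝ)) atTop atTop := tendsto_natCast_atTop_atTop
  have h7 := hI.i7 (fun n : ℕ => (n : ℝ)) (fun n => (n : ℝ)⁻¹ • m ((n : ℝ) • p)) p ht (by
    apply tendsto_const_nhds.congr'
    filter_upwards [eventually_gt_atTop 0] with n hn0
    have : (n : ℝ) ≠ 0 := by positivity
    rw [Prod.smul_fst, (hm.mem _).2, smul_smul, inv_mul_cancel₀ this, one_smul]) hp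
  obtain ⟨n, hn1, hn2, hn3⟩ := ((h7.eventually_gt_atTop (‖p‖ ^ 2 / 2)).and
    ((ht.eventually_gt_atTop (r / ‖p‖)).and (eventually_gt_atTop 0))).exists
  have hpos : (0:ℝ) < n := by exact_mod_cast hn3
  refine ⟨n, hpos.le, ?_, ?_⟩
  · rw [norm_smul, Real.norm_of_nonneg hpos.le]
    exact (div_lt_iff₀ hn).mp hn2
  · rw [smul_smul, mul_inv_cancel₀ hpos.ne', one_smul, lt_div_iff₀ (by positivity)] at hn1
    simp only [Fj, Jfun, (hm.mem _).2, norm_smul, Real.norm_of_nonneg hpos.le]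
    nlinarith

/-- The reduced functional as a bundled continuous map. -/
def FjC (hI : HypI I r a) (hm : IsMMap I m) : C(P, ℝ) := ⟨Fj I m, Fj_cont hI hm⟩

theorem cM_eq (hI : HypI I r a) (hm : IsMMap I m) :
    cM I r = sInf {y : ℝ | ∃ σ : C(unitInterval, P), σ 0 = 0 ∧ r < ‖σ 1‖ ∧ Fj I m (σ 1) < 0 ∧
      y = supC ((FjC hI hm).comp σ)} := by
  unfold cM
  congr 1
  ext y
  constructor
  · rintro ⟨γ, h1, h2, h3, h4, h5⟩
    have hγ : ∀ t, m (γ t).1 = γ t := fun t => (hm.uniq _ _ (h1 t) rfl).symm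
    refine ⟨⟨fun t => (γ t).1, continuous_fst.comp γ.continuous⟩, ?_, h3, ?_, ?_⟩
    · exact congrArg Prod.fst h2
    · change Jfun I (m (γ _).1) < 0
      rw [hγ]; exact h4
    · rw [h5]
      unfold supC
      congr 2
      ext t
      change _ = Jfun I (m (γ t).1)
      rw [hγ]
  · rintro ⟨σ, h2, h3, h4, h5⟩
    refine ⟨⟨fun t => m (σ t), (m_cont hI hm).comp σ.continuous⟩, fun t => (hm.mem _).1, ?_, ?_, h4, h5⟩
    · change m (σ 0) = 0
      rw [h2, m_zero hI hm]
    · change r < ‖(m (σ 1)).1‖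
      rw [(hm.mem _).2]; exact h3

/-- The straight path to `q`. -/
def rayC (q : P) : C(unitInterval, P) := ⟨fun t => (t : ℝ) • q, by fun_prop⟩

theorem cerami_exists (hI : HypI I r a) (hm : IsMMap I m) (hca : a ≤ cM I r)
    (hne : {y : ℝ | ∃ σ : C(unitInterval, P), σ 0 = 0 ∧ r < ‖σ 1‖ ∧ Fj I m (σ 1) < 0 ∧
      y = supC ((FjC hI hm).comp σ)}.Nonempty)
    (hbd : BddBelow {y : ℝ | ∃ σ : C(unitInterval, P), σ 0 = 0 ∧ r < ‖σ 1‖ ∧ Fj I m (σ 1) < 0 ∧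
      y = supC ((FjC hI hm).comp σ)}) (ε : ℝ) (hε : 0 < ε) :
    ∃ u : P, |Fj I m u - cM I r| ≤ ε ∧ (1 + ‖u‖) * ‖Grad I m u‖ < ε := by
  by_contra hcon
  push Not at hcon
  have ha := hI.i6.2.2
  set ε' := min ε (a / 2) with hε'
  have hpos : 0 < ε' := lt_min hε (by positivity)
  have hle : ε' ≤ a / 2 := min_le_right _ _
  have hlt : sInf {y : ℝ | ∃ σ : C(unitInterval, P), σ 0 = 0 ∧ r < ‖σ 1‖ ∧ Fj I m (σ 1) < 0 ∧
      y = supC ((FjC hI hm).comp σ)} < cM I r + ε' := by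
    rw [← cM_eq hI hm]; linarith
  obtain ⟨_, ⟨σ, h1, h2, h3, rfl⟩, h5⟩ := exists_lt_of_csInf_lt hne hlt
  refine mp_cerami_contra (Fj I m) (Grad I m) (Fj_hasFDerivAt hI hm) (Grad_cont hI hm)
    (cM I r) ε' ε hpos hε (fun u hu => hcon u (hu.trans (min_le_left _ _))) σ ?_ ?_ ?_ ?_
  · rw [h1, Fj_zero hI hm]; linarith
  · linarith
  · intro t
    exact (le_supC ((FjC hI hm).comp σ) t).trans h5.le
  · intro γ hg0 hg1
    obtain ⟨t, ht⟩ := exists_eq_supC ((FjC hI hm).comp γ)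
    refine ⟨t, ?_⟩
    have : cM I r ≤ supC ((FjC hI hm).comp γ) := by
      rw [cM_eq hI hm]
      exact csInf_le hbd ⟨γ, hg0.trans h1, by rw [hg1]; exact h2, by rw [hg1]; exact h3, rfl⟩
    rw [← ht] at this
    exact this

end Main

theorem abstract_cerami_and_nehari_level
    {P Q : Type*}
    [NormedAddCommGroup P] [InnerProductSpace ℝ P] [CompleteSpace P]
    [NormedAddCommGroup Q] [NormedSpace ℝ Q] [CompleteSpace Q]
    (I : P × Q → ℝ) (r a : ℝ)
    (hI : HypI I r a)
    (m : P → P × Q) (hm : IsMMap I m) :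
    -- (a)
    (a ≤ cM I r ∧ 0 < a ∧
      ∃ u : ℕ → P,
        Tendsto (fun n => Jfun I (m (u n))) atTop (nhds (cM I r)) ∧
        Tendsto (fun n => (1 + ‖u n‖) * ‖fderiv ℝ (fun p => Jfun I (m p)) (u n)‖)
          atTop (nhds 0)) ∧
    -- (b)
    cM I r = sInf (Jfun I '' NSet I) := by
  classical
  have ha := hI.i6.2.2
  have hr := hI.i6.1
  set S : Set ℝ := {y : ℝ | ∃ σ : C(unitInterval, P), σ 0 = 0 ∧ r < ‖σ 1‖ ∧ Fj I m (σ 1) < 0 ∧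
      y = supC ((FjC hI hm).comp σ)} with hS
  have hcS : cM I r = sInf S := cM_eq hI hm
  have hSa : ∀ y ∈ S, a ≤ y := by
    rintro _ ⟨σ, h1, h2, h3, rfl⟩
    have hnc : Continuous fun t : unitInterval => ‖σ t‖ := σ.continuous.norm
    obtain ⟨t, -, ht⟩ := intermediate_value_Icc (unitInterval.nonneg' (t := 1)) hnc.continuousOn
      (show r ∈ Set.Icc ‖σ 0‖ ‖σ 1‖ from ⟨by rw [h1, norm_zero]; exact hr.le, h2.le⟩)
    exact (Fj_ge hI hm (σ t) ht).trans (le_supC ((FjC hI hm).comp σ) t)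
  have hbd : BddBelow S := ⟨a, hSa⟩
  have hray : ∀ p : P, p ≠ 0 → ∃ T : ℝ, 0 ≤ T ∧ supC ((FjC hI hm).comp (rayC (T • p))) ∈ S := by
    intro p hp
    obtain ⟨T, hT0, hT1, hT2⟩ := exists_far hI hm p hp
    refine ⟨T, hT0, rayC (T • p), ?_, ?_, ?_, rfl⟩
    · simp [rayC]
    · simpa [rayC] using hT1
    · simpa [rayC] using hT2
  have hne : S.Nonempty := by
    obtain ⟨p, hp⟩ := exists_sphere hI
    obtain ⟨T, -, hT⟩ := hray p (by rintro rfl; rw [norm_zero] at hp; linarith)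
    exact ⟨_, hT⟩
  have hca : a ≤ cM I r := by
    rw [hcS]; exact le_csInf hne hSa
  refine ⟨⟨hca, ha, ?_⟩, ?_⟩
  · choose u hu1 hu2 using fun n : ℕ => cerami_exists hI hm hca hne hbd (1 / ((n : ℝ) + 1))
      (by positivity)
    have hlim : Tendsto (fun n : ℕ => 1 / ((n : ℝ) + 1)) atTop (nhds 0) :=
      tendsto_one_div_add_atTop_nhds_zero_nat
    refine ⟨u, ?_, ?_⟩
    · rw [tendsto_iff_dist_tendsto_zero]
      exact squeeze_zero (fun _ => dist_nonneg) hu1 hlim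
    · refine squeeze_zero (fun _ => by positivity) (fun n => ?_) hlim
      have h1 : fderiv ℝ (fun p => Jfun I (m p)) (u n) = innerSL ℝ (Grad I m (u n)) :=
        (Fj_hasFDerivAt hI hm (u n)).fderiv
      rw [h1, innerSL_apply_norm]
      exact (hu2 n).le
  · have hJN : ∀ w ∈ NSet I, w = m w.1 := fun w hw => hm.uniq _ _ hw.1 rfl
    have hcross : ∀ y ∈ S, ∃ w ∈ NSet I, Jfun I w ≤ y := by
      rintro _ ⟨σ, h1, h2, h3, rfl⟩
      obtain ⟨t, ht⟩ := crossing hI hm σ h1 h3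
      exact ⟨_, ht, le_supC ((FjC hI hm).comp σ) t⟩
    have hNle : ∀ w ∈ NSet I, cM I r ≤ Jfun I w := by
      intro w hw
      have hwm := hJN w hw
      obtain ⟨T, hT0, hT⟩ := hray w.1 hw.2.1
      rw [hcS]
      refine (csInf_le hbd hT).trans ?_
      apply supC_le
      intro t
      change Fj I m ((t : ℝ) • T • w.1) ≤ _
      rw [smul_smul]
      have := ray_max hI hm w.1 (by rw [← hwm]; exact hw) ((t : ℝ) * T)
        (mul_nonneg t.2.1 hT0)
      refine this.trans (le_of_eq ?_)
      rw [Fj, ← hwm]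
    have hNbd : BddBelow (Jfun I '' NSet I) :=
      ⟨cM I r, by rintro _ ⟨w, hw, rfl⟩; exact hNle w hw⟩
    have hNne : (Jfun I '' NSet I).Nonempty := by
      obtain ⟨y, hy⟩ := hne
      obtain ⟨w, hw, -⟩ := hcross y hy
      exact ⟨_, w, hw, rfl⟩
    apply le_antisymm
    · apply le_csInf hNne
      rintro _ ⟨w, hw, rfl⟩
      exact hNle w hw
    · rw [hcS]
      apply le_csInf hne
      intro y hy
      obtain ⟨w, hw, hwy⟩ := hcross y hy
      exact (csInf_le hNbd ⟨w, hw, rfl⟩).trans hwy
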